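/- Let H be the moment matrix of a branching mechanism and assume H₁₁H₂₂ − H₁₂H₂₁ > 0 (det H > 0) and H₁₁ + H₂₂ < 0 (trace H < 0). Then there exist constants λ > 0 and ϑ > 0 such that for every t ≥ 0 and all x, y ∈ 𝕄 there exists a coupling Π of P_t(x,·) and P_t(y,·) with ∫_{𝕄×𝕄}(|u₁−v₁|+|u₂−v₂|) Π(du,dv) ≤ ϑ·|x−y|·e^{−λt}, where |x−y| is the Euclidean norm; consequently W₁(δ_xP_t, δ_yP_t) ≤ ϑ|x−y|e^{−λt}. -/

import Mathlib

open MeasureTheory Filter Set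

noncomputable section

/-- The state space `𝕄 = [0,∞) × ℕ`, as a subset of `ℝ²`. -/
def Mset : Set (ℝ × ℝ) := {z | 0 ≤ z.1 ∧ ∃ n : ℕ, z.2 = (n : ℝ)}

/-- The space `𝕄₋₁ = [0,∞) × (ℕ ∪ {-1})`, as a subset of `ℝ²`. -/
def Mm1set : Set (ℝ × ℝ) := {z | 0 ≤ z.1 ∧ ∃ n : ℤ, (-1 : ℤ) ≤ n ∧ z.2 = (n : ℝ)}

/-- The data of a branching mechanism `(Φ₁, Φ₂)` of a mixed state branching process. -/
structure BranchingMechanism where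
  a11 : ℝ
  a21 : ℝ
  alpha : ℝ
  a21_nonneg : 0 ≤ a21
  alpha_nonneg : 0 ≤ alpha
  n1 : Measure (ℝ × ℝ)
  n2 : Measure (ℝ × ℝ)
  n1_sigmaFinite : SigmaFinite n1
  n2_sigmaFinite : SigmaFinite n2
  /-- `n₁` is supported on `𝕄` -/
  n1_supp : n1 Msetᶜ = 0
  /-- `n₂` is supported on `𝕄₋₁` -/
  n2_supp : n2 Mm1setᶜ = 0
  /-- `n₁` does not charge the origin -/
  n1_zero : n1 {0} = 0
  /-- `n₂` does not charge the origin -/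
  n2_zero : n2 {0} = 0
  /-- `n₂([0,∞) × {-1}) < ∞` -/
  n2_neg1 : n2 {z : ℝ × ℝ | z.2 = -1} ≠ ⊤
  /-- `∫ (z₁ ∧ z₁² + z₂) n₁(dz) < ∞` -/
  n1_moment : ∫⁻ z, ENNReal.ofReal (min z.1 (z.1 ^ 2) + z.2) ∂n1 ≠ ⊤
  /-- `∫ (z₁ + |z₂|) n₂(dz) < ∞` -/
  n2_moment : ∫⁻ z, ENNReal.ofReal (z.1 + |z.2|) ∂n2 ≠ ⊤

/-- `Φ₁(λ) = -a₁₁λ₁ - αλ₁² - ∫ (e^{-⟨λ,z⟩} - 1 + λ₁z₁) n₁(dz)`. -/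
def mPhi1 (B : BranchingMechanism) (l : ℝ × ℝ) : ℝ :=
  -B.a11 * l.1 - B.alpha * l.1 ^ 2 -
    ∫ z, (Real.exp (-(l.1 * z.1 + l.2 * z.2)) - 1 + l.1 * z.1) ∂B.n1

/-- `Φ₂(λ) = a₂₁λ₁ + ∫ (1 - e^{-⟨λ,z⟩}) n₂(dz)`. -/
def mPhi2 (B : BranchingMechanism) (l : ℝ × ℝ) : ℝ :=
  B.a21 * l.1 + ∫ z, (1 - Real.exp (-(l.1 * z.1 + l.2 * z.2))) ∂B.n2


/-- `V : t ↦ V(t,λ)` is a continuous `[0,∞)²`-valued solution of the cumulant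
equations (3.8) with initial value `λ = l`. -/
def SolvesCumulant (B : BranchingMechanism) (l : ℝ × ℝ) (V : ℝ → ℝ × ℝ) : Prop :=
  ContinuousOn V (Ici 0) ∧
  (∀ t : ℝ, 0 ≤ t → 0 ≤ (V t).1 ∧ 0 ≤ (V t).2) ∧
  (∀ t : ℝ, 0 ≤ t →
    (V t).1 = l.1 + ∫ s in (0:ℝ)..t, mPhi1 B (V s) ∧
    (V t).2 = l.2 + ∫ s in (0:ℝ)..t, mPhi2 B (V s))

/-- `P` is the family of transition probabilities of the MSB-process with cumulant
`V`: each `P_t(x,·)` is a Borel probability measure on `𝕄` with Laplace transform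
`∫ e^{-⟨λ,y⟩} P_t(x,dy) = exp(-⟨x,V(t,λ)⟩)`. -/
def IsMSBTransition (V : ℝ → (ℝ × ℝ) → ℝ × ℝ)
    (P : ℝ → (ℝ × ℝ) → Measure (ℝ × ℝ)) : Prop :=
  ∀ t : ℝ, 0 ≤ t → ∀ x ∈ Mset,
    IsProbabilityMeasure (P t x) ∧ P t x Msetᶜ = 0 ∧
    ∀ l : ℝ × ℝ, 0 ≤ l.1 → 0 ≤ l.2 →
      ∫ y, Real.exp (-(l.1 * y.1 + l.2 * y.2)) ∂(P t x)
        = Real.exp (-(x.1 * (V t l).1 + x.2 * (V t l).2))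

/-- `π : t ↦ π(t,λ)` is a `[0,∞)²`-valued solution of the moment linear system
`dπ₁/dt = -a₁₁π₁ + π₂ ∫ z₂ n₁(dz)`,
`dπ₂/dt = a₂₁π₁ + ∫ (z₁π₁ + z₂π₂) n₂(dz)`, with `π(0,λ) = l`. -/
def SolvesMoment (B : BranchingMechanism) (l : ℝ × ℝ) (π : ℝ → ℝ × ℝ) : Prop :=
  π 0 = l ∧
  (∀ t : ℝ, 0 ≤ t → 0 ≤ (π t).1 ∧ 0 ≤ (π t).2) ∧
  (∀ t : ℝ, 0 ≤ t →
    HasDerivWithinAt (fun s => (π s).1)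
      (-B.a11 * (π t).1 + (π t).2 * ∫ z, z.2 ∂B.n1) (Ici 0) t ∧
    HasDerivWithinAt (fun s => (π s).2)
      (B.a21 * (π t).1 + ∫ z, (z.1 * (π t).1 + z.2 * (π t).2) ∂B.n2) (Ici 0) t)

/-- `Pc` is a coupling of the probability measures `μ` and `ν` on `ℝ²`. -/
def IsCoupling (Pc : Measure ((ℝ × ℝ) × (ℝ × ℝ))) (μ ν : Measure (ℝ × ℝ)) : Prop :=
  IsProbabilityMeasure Pc ∧ Pc.map Prod.fst = μ ∧ Pc.map Prod.snd = ν

/-- Entries of the moment matrix `H`. -/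
def H11 (B : BranchingMechanism) : ℝ := -B.a11
def H12 (B : BranchingMechanism) : ℝ := ∫ z, z.2 ∂B.n1
def H21 (B : BranchingMechanism) : ℝ := B.a21 + ∫ z, z.1 ∂B.n2
def H22 (B : BranchingMechanism) : ℝ := ∫ z, z.2 ∂B.n2


/-! ### Uniqueness of Laplace transforms -/

open scoped NNReal ENNReal Topology BoundedContinuousFunction

def lapF (l : ℝ≥0 × ℝ≥0) : (ℝ≥0 × ℝ≥0) →ᵇ ℝ :=
  BoundedContinuousFunction.mkOfBound
    ⟨fun y => Real.exp (-((l.1 : ℝ) * y.1 + l.2 * y.2)), by fun_prop⟩ 1 (by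
      intro x y
      have h1 : ∀ z : ℝ≥0 × ℝ≥0, Real.exp (-((l.1 : ℝ) * z.1 + l.2 * z.2)) ≤ 1 := fun z =>
        Real.exp_le_one_iff.2 (by have : 0 ≤ (l.1 : ℝ) * z.1 + l.2 * z.2 := by positivity
                                  linarith)
      have h2 : ∀ z : ℝ≥0 × ℝ≥0, 0 ≤ Real.exp (-((l.1 : ℝ) * z.1 + l.2 * z.2)) := fun z =>
        (Real.exp_pos _).le
      show |Real.exp (-((l.1 : ℝ) * x.1 + l.2 * x.2)) - Real.exp (-((l.1 : ℝ) * y.1 + l.2 * y.2))| ≤ 1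
      rw [abs_le]
      constructor <;> linarith [h1 x, h1 y, h2 x, h2 y])

lemma lapF_apply (l y : ℝ≥0 × ℝ≥0) :
    lapF l y = Real.exp (-((l.1 : ℝ) * y.1 + l.2 * y.2)) := rfl

def lapHom : Multiplicative (ℝ≥0 × ℝ≥0) →* ((ℝ≥0 × ℝ≥0) →ᵇ ℝ) where
  toFun l := lapF l.toAdd
  map_one' := by ext y; simp [lapF_apply]
  map_mul' a b := by
    ext y
    simp only [BoundedContinuousFunction.mul_apply, lapF_apply, ← Real.exp_add, toAdd_mul,
      Prod.fst_add, Prod.snd_add, NNReal.coe_add]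
    congr 1; ring

def lapAlg : StarSubalgebra ℝ ((ℝ≥0 × ℝ≥0) →ᵇ ℝ) where
  toSubalgebra := Algebra.adjoin ℝ (MonoidHom.mrange lapHom : Set ((ℝ≥0 × ℝ≥0) →ᵇ ℝ))
  star_mem' := by
    intro a ha
    have : star a = a := by ext y; simp
    rw [this]; exact ha

lemma lap_unique_nn {μ ν : Measure (ℝ≥0 × ℝ≥0)} [IsFiniteMeasure μ] [IsFiniteMeasure ν]
    (h : ∀ l, ∫ y, lapF l y ∂μ = ∫ y, lapF l y ∂ν) : μ = ν := by
  refine ext_of_forall_mem_subalgebra_integral_eq_of_polish (𝕜 := ℝ) (A := lapAlg) ?_ ?_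
  · intro x y hxy
    have hmem : ∀ l, lapF l ∈ lapAlg := fun l =>
      Algebra.subset_adjoin ⟨Multiplicative.ofAdd l, rfl⟩
    by_cases h1 : x.1 = y.1
    · refine ⟨lapF (0, 1), ⟨_, ⟨lapF (0,1), hmem _, rfl⟩, rfl⟩, ?_⟩
      simp only [lapF_apply]
      intro h
      have := Real.exp_injective h
      simp at this
      exact hxy (Prod.ext h1 this)
    · refine ⟨lapF (1, 0), ⟨_, ⟨lapF (1,0), hmem _, rfl⟩, rfl⟩, ?_⟩
      simp only [lapF_apply]
      intro h
      have := Real.exp_injective h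
      simp at this
      exact h1 this
  · intro g hg
    have hg' : g ∈ Subalgebra.toSubmodule (Algebra.adjoin ℝ (MonoidHom.mrange lapHom : Set ((ℝ≥0 × ℝ≥0) →ᵇ ℝ))) := hg
    rw [Algebra.adjoin_eq_span, Submonoid.closure_eq] at hg'
    induction hg' using Submodule.span_induction with
    | mem x hx => obtain ⟨l, rfl⟩ := hx; exact h l.toAdd
    | zero => simp
    | add x y hx hy h1 h2 =>
      have hx1 := fun (μ : Measure (ℝ≥0 × ℝ≥0)) [IsFiniteMeasure μ] =>
        BoundedContinuousFunction.integrable μ x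
      have hy1 := fun (μ : Measure (ℝ≥0 × ℝ≥0)) [IsFiniteMeasure μ] =>
        BoundedContinuousFunction.integrable μ y
      simp only [BoundedContinuousFunction.coe_add, Pi.add_apply]
      rw [integral_add (hx1 μ) (hy1 μ), integral_add (hx1 ν) (hy1 ν), h1 ?_, h2 ?_]
      · show y ∈ Subalgebra.toSubmodule (Algebra.adjoin ℝ (MonoidHom.mrange lapHom : Set ((ℝ≥0 × ℝ≥0) →ᵇ ℝ)))
        rw [Algebra.adjoin_eq_span, Submonoid.closure_eq]; exact hy
      · show x ∈ Subalgebra.toSubmodule (Algebra.adjoin ℝ (MonoidHom.mrange lapHom : Set ((ℝ≥0 × ℝ≥0) →ᵇ ℝ)))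
        rw [Algebra.adjoin_eq_span, Submonoid.closure_eq]; exact hx
    | smul a x hx h1 =>
      simp only [BoundedContinuousFunction.coe_smul]
      rw [integral_smul, integral_smul, h1 ?_]
      show x ∈ Subalgebra.toSubmodule (Algebra.adjoin ℝ (MonoidHom.mrange lapHom : Set ((ℝ≥0 × ℝ≥0) →ᵇ ℝ)))
      rw [Algebra.adjoin_eq_span, Submonoid.closure_eq]; exact hx

lemma lap_unique {μ ν : Measure (ℝ × ℝ)} [IsFiniteMeasure μ] [IsFiniteMeasure ν]
    (hμ : ∀ᵐ y ∂μ, 0 ≤ y.1 ∧ 0 ≤ y.2) (hν : ∀ᵐ y ∂ν, 0 ≤ y.1 ∧ 0 ≤ y.2)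
    (h : ∀ l : ℝ × ℝ, 0 ≤ l.1 → 0 ≤ l.2 →
      ∫ y, Real.exp (-(l.1 * y.1 + l.2 * y.2)) ∂μ = ∫ y, Real.exp (-(l.1 * y.1 + l.2 * y.2)) ∂ν) :
    μ = ν := by
  let T : ℝ × ℝ → ℝ≥0 × ℝ≥0 := fun y => (y.1.toNNReal, y.2.toNNReal)
  let S : ℝ≥0 × ℝ≥0 → ℝ × ℝ := fun y => (y.1, y.2)
  have hT : Measurable T := by fun_prop
  have hS : Measurable S := by fun_prop
  have key : ∀ ρ : Measure (ℝ × ℝ), (∀ᵐ y ∂ρ, 0 ≤ y.1 ∧ 0 ≤ y.2) → (ρ.map T).map S = ρ := by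
    intro ρ hρ
    rw [Measure.map_map hS hT]
    have : S ∘ T =ᵐ[ρ] id := by
      filter_upwards [hρ] with y hy
      simp [S, T, hy.1, hy.2]
    rw [Measure.map_congr this, Measure.map_id]
  have key2 : ∀ ρ : Measure (ℝ × ℝ), (∀ᵐ y ∂ρ, 0 ≤ y.1 ∧ 0 ≤ y.2) → ∀ l : ℝ≥0 × ℝ≥0,
      ∫ y, lapF l y ∂(ρ.map T) = ∫ y, Real.exp (-((l.1:ℝ) * y.1 + l.2 * y.2)) ∂ρ := by
    intro ρ hρ l
    rw [integral_map hT.aemeasurable (lapF l).continuous.aestronglyMeasurable]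
    apply integral_congr_ae
    filter_upwards [hρ] with y hy
    simp [lapF_apply, T, hy.1, hy.2]
  rw [← key μ hμ, ← key ν hν]
  congr 1
  have := Measure.isFiniteMeasure_map μ T
  have := Measure.isFiniteMeasure_map ν T
  apply lap_unique_nn
  intro l
  rw [key2 μ hμ, key2 ν hν]
  exact h (l.1, l.2) l.1.2 l.2.2

/-! ### The mechanism -/

lemma n1_ae (B : BranchingMechanism) : ∀ᵐ z ∂B.n1, 0 ≤ z.1 ∧ 0 ≤ z.2 := by
  have : ∀ᵐ z ∂B.n1, z ∈ Mset := B.n1_supp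
  filter_upwards [this] with z hz
  obtain ⟨h1, n, h2⟩ := hz
  exact ⟨h1, by rw [h2]; positivity⟩

lemma n2_ae (B : BranchingMechanism) : ∀ᵐ z ∂B.n2, 0 ≤ z.1 ∧ -1 ≤ z.2 := by
  have : ∀ᵐ z ∂B.n2, z ∈ Mm1set := B.n2_supp
  filter_upwards [this] with z hz
  obtain ⟨h1, n, hn, h2⟩ := hz
  exact ⟨h1, by rw [h2]; exact_mod_cast hn⟩

lemma n1_int (B : BranchingMechanism) :
    Integrable (fun z : ℝ × ℝ => min z.1 (z.1 ^ 2) + z.2) B.n1 := by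
  refine (lintegral_ofReal_ne_top_iff_integrable (by fun_prop) ?_).1 B.n1_moment
  filter_upwards [n1_ae B] with z hz
  have := hz.1; have := hz.2
  simp only [Pi.zero_apply]
  positivity

lemma n2_int (B : BranchingMechanism) :
    Integrable (fun z : ℝ × ℝ => z.1 + |z.2|) B.n2 := by
  refine (lintegral_ofReal_ne_top_iff_integrable (by fun_prop) ?_).1 B.n2_moment
  filter_upwards [n2_ae B] with z hz
  have := hz.1
  simp only [Pi.zero_apply]
  positivity

lemma n1_int2 (B : BranchingMechanism) : Integrable (fun z : ℝ × ℝ => z.2) B.n1 := by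
  refine (n1_int B).mono' (by fun_prop) ?_
  filter_upwards [n1_ae B] with z hz
  have := hz.1
  rw [Real.norm_eq_abs, abs_of_nonneg hz.2]
  have : 0 ≤ min z.1 (z.1 ^ 2) := by positivity
  linarith

lemma n2_int1 (B : BranchingMechanism) : Integrable (fun z : ℝ × ℝ => z.1) B.n2 := by
  refine (n2_int B).mono' (by fun_prop) ?_
  filter_upwards [n2_ae B] with z hz
  rw [Real.norm_eq_abs, abs_of_nonneg hz.1]
  linarith [abs_nonneg z.2]

lemma n2_int2 (B : BranchingMechanism) : Integrable (fun z : ℝ × ℝ => z.2) B.n2 := by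
  refine (n2_int B).mono' (by fun_prop) ?_
  filter_upwards [n2_ae B] with z hz
  rw [Real.norm_eq_abs]
  linarith [hz.1]

lemma f1_bound {K l1 l2 z1 z2 : ℝ} (h1 : 0 ≤ l1) (h2 : 0 ≤ l2) (k1 : l1 ≤ K) (k2 : l2 ≤ K)
    (hz1 : 0 ≤ z1) (hz2 : 0 ≤ z2) :
    |Real.exp (-(l1 * z1 + l2 * z2)) - 1 + l1 * z1| ≤ (K + K ^ 2) * (min z1 (z1 ^ 2) + z2) := by
  have hK : 0 ≤ K := h1.trans k1
  have a1 : 0 ≤ l1 * z1 := by positivity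
  have a2 : 0 ≤ l2 * z2 := by positivity
  have e1 : Real.exp (-(l1 * z1 + l2 * z2)) = Real.exp (-(l1 * z1)) * Real.exp (-(l2 * z2)) := by
    rw [← Real.exp_add]; congr 1; ring
  have b1 := Real.add_one_le_exp (-(l1 * z1))
  have b2 := Real.add_one_le_exp (-(l2 * z2))
  have b3 : Real.exp (-(l1 * z1)) ≤ 1 := Real.exp_le_one_iff.2 (by linarith)
  have b4 : Real.exp (-(l2 * z2)) ≤ 1 := Real.exp_le_one_iff.2 (by linarith)
  have b5 := Real.exp_pos (-(l1 * z1))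
  have b6 := Real.exp_pos (-(l2 * z2))
  have c1 : l1 * z1 ≤ K * z1 := by gcongr
  have c2 : l2 * z2 ≤ K * z2 := by gcongr
  have c3 : Real.exp (-(l1 * z1)) - 1 + l1 * z1 ≤ (l1 * z1) ^ 2 := by
    have := Real.add_one_le_exp (l1 * z1)
    have h3 : Real.exp (-(l1 * z1)) * Real.exp (l1 * z1) = 1 := by
      rw [← Real.exp_add]; simp
    nlinarith
  have c4 : (l1 * z1) ^ 2 ≤ K ^ 2 * z1 ^ 2 := by
    rw [mul_pow]; gcongr
  have d : Real.exp (-(l1 * z1)) - 1 + l1 * z1 ≤ (K + K ^ 2) * min z1 (z1 ^ 2) := by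
    rcases min_choice z1 (z1 ^ 2) with h | h <;> rw [h]
    · nlinarith [mul_nonneg (sq_nonneg K) hz1]
    · nlinarith [mul_nonneg hK (sq_nonneg z1)]
  have d2 : (K + K ^ 2) * z2 ≥ l2 * z2 := by nlinarith [mul_nonneg (sq_nonneg K) hz2]
  have d3 : 0 ≤ (K + K ^ 2) * min z1 (z1 ^ 2) := by positivity
  rw [e1, abs_le]
  constructor <;> nlinarith

lemma f2_bound {K l1 l2 z1 z2 : ℝ} (h1 : 0 ≤ l1) (h2 : 0 ≤ l2) (k1 : l1 ≤ K) (k2 : l2 ≤ K)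
    (hz1 : 0 ≤ z1) (hz2 : -1 ≤ z2) :
    |1 - Real.exp (-(l1 * z1 + l2 * z2))| ≤ (K * Real.exp K) * (z1 + |z2|) := by
  have hK : 0 ≤ K := h1.trans k1
  set u := l1 * z1 + l2 * z2 with hu
  have hu1 : |u| ≤ K * (z1 + |z2|) := by
    calc |u| ≤ |l1 * z1| + |l2 * z2| := abs_add_le _ _
      _ = l1 * z1 + l2 * |z2| := by
        rw [abs_mul, abs_mul, abs_of_nonneg h1, abs_of_nonneg h2, abs_of_nonneg hz1]
      _ ≤ K * z1 + K * |z2| := by gcongr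
      _ = _ := by ring
  have hu2 : -u ≤ K := by nlinarith [mul_nonneg h1 hz1, mul_nonneg h2 (by linarith : 0 ≤ z2 + 1)]
  have e1 : 1 ≤ Real.exp K := Real.one_le_exp hK
  have e2 : Real.exp (-u) ≤ Real.exp K := Real.exp_le_exp.2 hu2
  have key : |1 - Real.exp (-u)| ≤ |u| * Real.exp K := by
    have p1 := Real.add_one_le_exp (-u)
    have p2 := Real.add_one_le_exp u
    have p3 : Real.exp (-u) * Real.exp u = 1 := by rw [← Real.exp_add]; simp
    have p4 := Real.exp_pos (-u)
    have q1 := le_abs_self u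
    have q2 := neg_abs_le u
    have q3 := abs_nonneg u
    rw [abs_le]
    constructor
    · have : Real.exp (-u) - 1 ≤ (-u) * Real.exp (-u) := by nlinarith
      have : (-u) * Real.exp (-u) ≤ |u| * Real.exp (-u) := by
        apply mul_le_mul_of_nonneg_right (by linarith) p4.le
      have : |u| * Real.exp (-u) ≤ |u| * Real.exp K := by gcongr
      linarith
    · nlinarith
  calc _ ≤ |u| * Real.exp K := key
    _ ≤ K * (z1 + |z2|) * Real.exp K := by gcongr
    _ = _ := by ring

lemma phi1_cont (B : BranchingMechanism) {W : ℝ → ℝ × ℝ} (hW : Continuous W)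
    (h0 : ∀ s, 0 ≤ (W s).1 ∧ 0 ≤ (W s).2) : Continuous (fun s => mPhi1 B (W s)) := by
  unfold mPhi1
  refine Continuous.sub (by fun_prop) ?_
  rw [continuous_iff_continuousAt]
  intro s
  set K := max (W s).1 (W s).2 + 1
  have e1 : ∀ᶠ r in 𝓝 s, (W r).1 < K :=
    (hW.fst.continuousAt).eventually_lt continuousAt_const (by simp only [K]; linarith [le_max_left (W s).1 (W s).2])
  have e2 : ∀ᶠ r in 𝓝 s, (W r).2 < K :=
    (hW.snd.continuousAt).eventually_lt continuousAt_const (by simp only [K]; linarith [le_max_right (W s).1 (W s).2])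
  refine continuousAt_of_dominated (bound := fun z => (K + K ^ 2) * (min z.1 (z.1 ^ 2) + z.2)) ?_ ?_ ?_ ?_
  · exact Eventually.of_forall fun r => by fun_prop
  · filter_upwards [e1, e2] with r h1 h2
    filter_upwards [n1_ae B] with z hz
    exact f1_bound (h0 r).1 (h0 r).2 h1.le h2.le hz.1 hz.2
  · exact (n1_int B).const_mul _
  · exact Eventually.of_forall fun z => by fun_prop

lemma phi2_cont (B : BranchingMechanism) {W : ℝ → ℝ × ℝ} (hW : Continuous W)
    (h0 : ∀ s, 0 ≤ (W s).1 ∧ 0 ≤ (W s).2) : Continuous (fun s => mPhi2 B (W s)) := by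
  unfold mPhi2
  refine Continuous.add (by fun_prop) ?_
  rw [continuous_iff_continuousAt]
  intro s
  set K := max (W s).1 (W s).2 + 1
  have e1 : ∀ᶠ r in 𝓝 s, (W r).1 < K :=
    (hW.fst.continuousAt).eventually_lt continuousAt_const (by simp only [K]; linarith [le_max_left (W s).1 (W s).2])
  have e2 : ∀ᶠ r in 𝓝 s, (W r).2 < K :=
    (hW.snd.continuousAt).eventually_lt continuousAt_const (by simp only [K]; linarith [le_max_right (W s).1 (W s).2])
  refine continuousAt_of_dominated (bound := fun z => (K * Real.exp K) * (z.1 + |z.2|)) ?_ ?_ ?_ ?_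
  · exact Eventually.of_forall fun r => by fun_prop
  · filter_upwards [e1, e2] with r h1 h2
    filter_upwards [n2_ae B] with z hz
    exact f2_bound (h0 r).1 (h0 r).2 h1.le h2.le hz.1 hz.2
  · exact (n2_int B).const_mul _
  · exact Eventually.of_forall fun z => by fun_prop

lemma phi1_le (B : BranchingMechanism) {l : ℝ × ℝ} (h1 : 0 ≤ l.1) (h2 : 0 ≤ l.2) :
    mPhi1 B l ≤ H11 B * l.1 + H12 B * l.2 := by
  unfold mPhi1 H11 H12
  have hi : Integrable (fun z : ℝ × ℝ => Real.exp (-(l.1 * z.1 + l.2 * z.2)) - 1 + l.1 * z.1) B.n1 := by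
    refine ((n1_int B).const_mul (max l.1 l.2 + max l.1 l.2 ^ 2)).mono' (by fun_prop) ?_
    filter_upwards [n1_ae B] with z hz
    exact f1_bound h1 h2 (le_max_left _ _) (le_max_right _ _) hz.1 hz.2
  have : ∫ z, -(l.2 * z.2) ∂B.n1 ≤
      ∫ z, (Real.exp (-(l.1 * z.1 + l.2 * z.2)) - 1 + l.1 * z.1) ∂B.n1 := by
    apply integral_mono ((n1_int2 B).const_mul l.2).neg hi
    intro z
    have := Real.add_one_le_exp (-(l.1 * z.1 + l.2 * z.2))
    simp only [Pi.neg_apply]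
    linarith
  rw [integral_neg, integral_const_mul] at this
  have := mul_nonneg B.alpha_nonneg (sq_nonneg l.1)
  linarith

lemma phi2_le (B : BranchingMechanism) {l : ℝ × ℝ} (h1 : 0 ≤ l.1) (h2 : 0 ≤ l.2) :
    mPhi2 B l ≤ H21 B * l.1 + H22 B * l.2 := by
  unfold mPhi2 H21 H22
  have hi : Integrable (fun z : ℝ × ℝ => 1 - Real.exp (-(l.1 * z.1 + l.2 * z.2))) B.n2 := by
    refine ((n2_int B).const_mul (max l.1 l.2 * Real.exp (max l.1 l.2))).mono' (by fun_prop) ?_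
    filter_upwards [n2_ae B] with z hz
    exact f2_bound h1 h2 (le_max_left _ _) (le_max_right _ _) hz.1 hz.2
  have : ∫ z, (1 - Real.exp (-(l.1 * z.1 + l.2 * z.2))) ∂B.n2 ≤
      ∫ z, (l.1 * z.1 + l.2 * z.2) ∂B.n2 := by
    apply integral_mono hi (((n2_int1 B).const_mul l.1).add ((n2_int2 B).const_mul l.2))
    intro z
    have := Real.add_one_le_exp (-(l.1 * z.1 + l.2 * z.2))
    simp only [Pi.add_apply]
    linarith
  rw [integral_add ((n2_int1 B).const_mul l.1) ((n2_int2 B).const_mul l.2),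
    integral_const_mul, integral_const_mul] at this
  linarith

lemma H12_nonneg (B : BranchingMechanism) : 0 ≤ H12 B :=
  integral_nonneg_of_ae (by filter_upwards [n1_ae B] with z hz; exact hz.2)

lemma H21_nonneg (B : BranchingMechanism) : 0 ≤ H21 B :=
  add_nonneg B.a21_nonneg
    (integral_nonneg_of_ae (by filter_upwards [n2_ae B] with z hz; exact hz.1))

lemma V_decay (B : BranchingMechanism) {l : ℝ × ℝ} {V : ℝ → ℝ × ℝ} (hV : SolvesCumulant B l V)
    {w1 w2 lam : ℝ} (hw1 : 0 ≤ w1) (hw2 : 0 ≤ w2)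
    (c1 : w1 * H11 B + w2 * H21 B ≤ -lam * w1) (c2 : w1 * H12 B + w2 * H22 B ≤ -lam * w2)
    {t : ℝ} (ht : 0 ≤ t) :
    w1 * (V t).1 + w2 * (V t).2 ≤ (w1 * l.1 + w2 * l.2) * Real.exp (-lam * t) := by
  obtain ⟨hc, hn, he⟩ := hV
  set W : ℝ → ℝ × ℝ := fun s => V (max s 0) with hWdef
  have hW : Continuous W :=
    hc.comp_continuous (by fun_prop) (fun s => le_max_right s 0)
  have hW0 : ∀ s, 0 ≤ (W s).1 ∧ 0 ≤ (W s).2 := fun s => hn _ (le_max_right s 0)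
  have p1 := phi1_cont B hW hW0
  have p2 := phi2_cont B hW hW0
  set G : ℝ → ℝ := fun s => w1 * (l.1 + ∫ r in (0:ℝ)..s, mPhi1 B (W r)) +
    w2 * (l.2 + ∫ r in (0:ℝ)..s, mPhi2 B (W r)) with hG
  have hGV : ∀ s, 0 ≤ s → G s = w1 * (W s).1 + w2 * (W s).2 := by
    intro s hs
    have e1 : W s = V s := by simp [hWdef, max_eq_left hs]
    have i1 : ∫ r in (0:ℝ)..s, mPhi1 B (W r) = ∫ r in (0:ℝ)..s, mPhi1 B (V r) := by
      apply intervalIntegral.integral_congr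
      intro r hr
      rw [uIcc_of_le hs] at hr
      simp [hWdef, max_eq_left hr.1]
    have i2 : ∫ r in (0:ℝ)..s, mPhi2 B (W r) = ∫ r in (0:ℝ)..s, mPhi2 B (V r) := by
      apply intervalIntegral.integral_congr
      intro r hr
      rw [uIcc_of_le hs] at hr
      simp [hWdef, max_eq_left hr.1]
    simp only [hG]
    rw [i1, i2, ← (he s hs).1, ← (he s hs).2, e1]
  have hd : ∀ s, HasDerivAt G (w1 * mPhi1 B (W s) + w2 * mPhi2 B (W s)) s := by
    intro s
    have d1 := intervalIntegral.integral_hasDerivAt_right (p1.intervalIntegrable 0 s)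
      (p1.stronglyMeasurableAtFilter _ _) p1.continuousAt
    have d2 := intervalIntegral.integral_hasDerivAt_right (p2.intervalIntegrable 0 s)
      (p2.stronglyMeasurableAtFilter _ _) p2.continuousAt
    exact ((d1.const_add l.1).const_mul w1).add ((d2.const_add l.2).const_mul w2)
  have hd2 : ∀ s, HasDerivAt (fun s => G s * Real.exp (lam * s))
      ((w1 * mPhi1 B (W s) + w2 * mPhi2 B (W s)) * Real.exp (lam * s)
        + G s * (Real.exp (lam * s) * lam)) s := by
    intro s
    have : HasDerivAt (fun s => Real.exp (lam * s)) (Real.exp (lam * s) * lam) s := by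
      simpa using ((hasDerivAt_id s).const_mul lam).exp
    exact (hd s).mul this
  have anti : AntitoneOn (fun s => G s * Real.exp (lam * s)) (Ici 0) := by
    apply antitoneOn_of_deriv_nonpos (convex_Ici 0)
    · exact fun s _ => (hd2 s).continuousAt.continuousWithinAt
    · exact fun s _ => (hd2 s).differentiableAt.differentiableWithinAt
    · intro s hs
      rw [interior_Ici, mem_Ioi] at hs
      rw [(hd2 s).deriv, hGV s hs.le]
      have q1 := mul_le_mul_of_nonneg_left (phi1_le B (hW0 s).1 (hW0 s).2) hw1
      have q2 := mul_le_mul_of_nonneg_left (phi2_le B (hW0 s).1 (hW0 s).2) hw2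
      have q3 := mul_le_mul_of_nonneg_right c1 (hW0 s).1
      have q4 := mul_le_mul_of_nonneg_right c2 (hW0 s).2
      have q5 := Real.exp_pos (lam * s)
      have : w1 * mPhi1 B (W s) + w2 * mPhi2 B (W s) + (w1 * (W s).1 + w2 * (W s).2) * lam ≤ 0 := by
        nlinarith
      nlinarith
  have := anti (mem_Ici.2 le_rfl) (mem_Ici.2 ht) ht
  have e0 : G 0 = w1 * l.1 + w2 * l.2 := by simp [hG]
  have e1 : W t = V t := by simp [hWdef, max_eq_left ht]
  simp only [mul_zero, Real.exp_zero, mul_one] at this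
  rw [e0, hGV t ht, e1] at this
  have h3 : Real.exp (lam * t) * Real.exp (-lam * t) = 1 := by
    rw [← Real.exp_add]; simp
  calc _ = (w1 * (V t).1 + w2 * (V t).2) * Real.exp (lam * t) * Real.exp (-lam * t) := by
        rw [mul_assoc, h3, mul_one]
    _ ≤ _ := by gcongr

/-! ### Moments and coupling -/

lemma Mset_ae {μ : Measure (ℝ × ℝ)} (h : μ Msetᶜ = 0) : ∀ᵐ y ∂μ, 0 ≤ y.1 ∧ 0 ≤ y.2 := by
  have : ∀ᵐ z ∂μ, z ∈ Mset := h
  filter_upwards [this] with z hz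
  obtain ⟨h1, n, h2⟩ := hz
  exact ⟨h1, by rw [h2]; positivity⟩

lemma lap_integrable {μ : Measure (ℝ × ℝ)} [IsProbabilityMeasure μ]
    (h : ∀ᵐ y ∂μ, 0 ≤ y.1 ∧ 0 ≤ y.2) {a b : ℝ} (ha : 0 ≤ a) (hb : 0 ≤ b) :
    Integrable (fun y : ℝ × ℝ => Real.exp (-(a * y.1 + b * y.2))) μ := by
  refine (integrable_const (1:ℝ)).mono' (by fun_prop) ?_
  filter_upwards [h] with y hy
  rw [Real.norm_eq_abs, abs_of_pos (Real.exp_pos _)]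
  apply Real.exp_le_one_iff.2
  have := mul_nonneg ha hy.1
  have := mul_nonneg hb hy.2
  linarith

lemma first_moment {μ : Measure (ℝ × ℝ)} [IsProbabilityMeasure μ]
    (h : ∀ᵐ y ∂μ, 0 ≤ y.1 ∧ 0 ≤ y.2) {C : ℝ}
    (hC : ∀ e : ℝ, 0 < e → 1 - C * e ≤ ∫ y, Real.exp (-(e * y.1 + e * y.2)) ∂μ) :
    ∫⁻ y, ENNReal.ofReal (|y.1| + |y.2|) ∂μ ≤ ENNReal.ofReal C := by
  let f : ℝ → ℝ × ℝ → ℝ≥0∞ := fun e y =>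
    ENNReal.ofReal (e⁻¹ * (1 - Real.exp (-(e * y.1 + e * y.2))))
  have hf : ∀ e, Measurable (f e) := fun e => by fun_prop
  have lim : ∀ y : ℝ × ℝ, Tendsto (fun e => f e y) (𝓝[>] 0) (𝓝 (ENNReal.ofReal (y.1 + y.2))) := by
    intro y
    apply ENNReal.tendsto_ofReal
    have hd : HasDerivAt (fun e : ℝ => 1 - Real.exp (-(e * y.1 + e * y.2))) (y.1 + y.2) 0 := by
      have h1 : HasDerivAt (fun e : ℝ => -(e * y.1 + e * y.2)) (-(1 * y.1 + 1 * y.2)) 0 :=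
        (((hasDerivAt_id (0:ℝ)).mul_const y.1).add ((hasDerivAt_id (0:ℝ)).mul_const y.2)).neg
      have h2 := (h1.exp).const_sub 1
      exact h2.congr_deriv (by simp)
    have := hd.tendsto_slope_zero_right
    simpa using this
  have step : ∀ e : ℝ, 0 < e → ∫⁻ y, f e y ∂μ ≤ ENNReal.ofReal C := by
    intro e he
    have hi := lap_integrable h he.le he.le
    have hi2 : Integrable (fun y : ℝ × ℝ => e⁻¹ * (1 - Real.exp (-(e * y.1 + e * y.2)))) μ :=
      ((integrable_const (1:ℝ)).sub hi).const_mul _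
    rw [← ofReal_integral_eq_lintegral_ofReal hi2]
    · apply ENNReal.ofReal_le_ofReal
      rw [integral_const_mul, integral_sub (integrable_const _) hi]
      simp only [integral_const, probReal_univ, smul_eq_mul, mul_one]
      rw [inv_mul_le_iff₀ he]
      linarith [hC e he]
    · filter_upwards [h] with y hy
      have := mul_nonneg he.le hy.1
      have := mul_nonneg he.le hy.2
      have : Real.exp (-(e * y.1 + e * y.2)) ≤ 1 := Real.exp_le_one_iff.2 (by linarith)
      simp only [Pi.zero_apply]
      exact mul_nonneg (by positivity) (by linarith)
  calc ∫⁻ y, ENNReal.ofReal (|y.1| + |y.2|) ∂μ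
      = ∫⁻ y, liminf (fun e => f e y) (𝓝[>] 0) ∂μ := by
        apply lintegral_congr_ae
        filter_upwards [h] with y hy
        rw [(lim y).liminf_eq, abs_of_nonneg hy.1, abs_of_nonneg hy.2]
    _ ≤ liminf (fun e => ∫⁻ y, f e y ∂μ) (𝓝[>] 0) := lintegral_liminf_le hf
    _ ≤ limsup (fun e => ∫⁻ y, f e y ∂μ) (𝓝[>] 0) := liminf_le_limsup
    _ ≤ ENNReal.ofReal C := by
        apply limsup_le_of_le
        · isBoundedDefault
        · filter_upwards [self_mem_nhdsWithin] with e he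
          exact step e he

lemma branch {Ω : Type} [MeasurableSpace Ω] {p q μ : Measure (ℝ × ℝ)} {R : Measure Ω}
    [IsProbabilityMeasure p] [IsProbabilityMeasure q] [IsProbabilityMeasure μ]
    [IsProbabilityMeasure R] {g : Ω → ℝ × ℝ} (hg : Measurable g) (hR : R.map g = q)
    (hp : ∀ᵐ y ∂p, 0 ≤ y.1 ∧ 0 ≤ y.2) (hq : ∀ᵐ y ∂q, 0 ≤ y.1 ∧ 0 ≤ y.2)
    (hμ : ∀ᵐ y ∂μ, 0 ≤ y.1 ∧ 0 ≤ y.2)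
    (hL : ∀ l : ℝ × ℝ, 0 ≤ l.1 → 0 ≤ l.2 →
      (∫ y, Real.exp (-(l.1 * y.1 + l.2 * y.2)) ∂p) * (∫ y, Real.exp (-(l.1 * y.1 + l.2 * y.2)) ∂q)
        = ∫ y, Real.exp (-(l.1 * y.1 + l.2 * y.2)) ∂μ) :
    (p.prod R).map (fun w => w.1 + g w.2) = μ := by
  have hm : Measurable (fun w : (ℝ × ℝ) × Ω => w.1 + g w.2) := by fun_prop
  have hset : MeasurableSet {y : ℝ × ℝ | 0 ≤ y.1 ∧ 0 ≤ y.2} :=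
    (measurableSet_le measurable_const measurable_fst).inter
      (measurableSet_le measurable_const measurable_snd)
  have : IsProbabilityMeasure ((p.prod R).map (fun w => w.1 + g w.2)) :=
    Measure.isProbabilityMeasure_map hm.aemeasurable
  refine lap_unique ?_ hμ ?_
  · rw [ae_map_iff hm.aemeasurable hset]
    have h1 : ∀ᵐ w ∂(p.prod R), 0 ≤ w.1.1 ∧ 0 ≤ w.1.2 :=
      Measure.quasiMeasurePreserving_fst.ae hp
    have h2' : ∀ᵐ w ∂(R), 0 ≤ (g w).1 ∧ 0 ≤ (g w).2 := by
      rw [← hR] at hq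
      exact ae_of_ae_map hg.aemeasurable hq
    have h2 : ∀ᵐ w ∂(p.prod R), 0 ≤ (g w.2).1 ∧ 0 ≤ (g w.2).2 :=
      Measure.quasiMeasurePreserving_snd.ae h2'
    filter_upwards [h1, h2] with w a b
    exact ⟨add_nonneg a.1 b.1, add_nonneg a.2 b.2⟩
  · intro l h1 h2
    rw [← hL l h1 h2, integral_map hm.aemeasurable (by fun_prop), ← hR,
      integral_map hg.aemeasurable (by fun_prop), ← integral_prod_mul]
    congr 1
    ext w
    rw [← Real.exp_add]
    congr 1
    simp only [Prod.fst_add, Prod.snd_add]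
    ring

lemma transition_moment {V : ℝ → (ℝ × ℝ) → ℝ × ℝ} {P : ℝ → (ℝ × ℝ) → Measure (ℝ × ℝ)}
    (hP : IsMSBTransition V P) {t : ℝ} (ht : 0 ≤ t) {D : ℝ}
    (hD : ∀ e : ℝ, 0 < e → (V t (e, e)).1 ≤ D * e ∧ (V t (e, e)).2 ≤ D * e)
    {x : ℝ × ℝ} (hx : x ∈ Mset) :
    ∫⁻ y, ENNReal.ofReal (|y.1| + |y.2|) ∂(P t x) ≤ ENNReal.ofReal ((x.1 + x.2) * D) := by
  obtain ⟨h1, h2, h3⟩ := hP t ht x hx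
  apply first_moment (Mset_ae h2)
  intro e he
  rw [h3 (e, e) he.le he.le]
  have hx1 : 0 ≤ x.1 := hx.1
  have hx2 : 0 ≤ x.2 := by obtain ⟨_, n, hn⟩ := hx; rw [hn]; positivity
  have := Real.add_one_le_exp (-(x.1 * (V t (e, e)).1 + x.2 * (V t (e, e)).2))
  have a1 := mul_le_mul_of_nonneg_left (hD e he).1 hx1
  have a2 := mul_le_mul_of_nonneg_left (hD e he).2 hx2
  nlinarith

lemma Mset_min {x y : ℝ × ℝ} (hx : x ∈ Mset) (hy : y ∈ Mset) :
    (min x.1 y.1, min x.2 y.2) ∈ Mset := by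
  obtain ⟨h1, n, hn⟩ := hx
  obtain ⟨h2, k, hk⟩ := hy
  exact ⟨le_min h1 h2, min n k, by simp [hn, hk]⟩

lemma Mset_sub {x y : ℝ × ℝ} (hx : x ∈ Mset) (hy : y ∈ Mset) (h1 : y.1 ≤ x.1) (h2 : y.2 ≤ x.2) :
    (x.1 - y.1, x.2 - y.2) ∈ Mset := by
  obtain ⟨_, n, hn⟩ := hx
  obtain ⟨_, k, hk⟩ := hy
  refine ⟨sub_nonneg.2 h1, n - k, ?_⟩
  rw [hn, hk] at h2
  rw [Nat.cast_sub (by exact_mod_cast h2)]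
  simp [hn, hk]

lemma coupling_exists {V : ℝ → (ℝ × ℝ) → ℝ × ℝ} {P : ℝ → (ℝ × ℝ) → Measure (ℝ × ℝ)}
    (hP : IsMSBTransition V P) {t : ℝ} (ht : 0 ≤ t) {D : ℝ} (hD0 : 0 ≤ D)
    (hD : ∀ e : ℝ, 0 < e → (V t (e, e)).1 ≤ D * e ∧ (V t (e, e)).2 ≤ D * e)
    {x y : ℝ × ℝ} (hx : x ∈ Mset) (hy : y ∈ Mset) :
    ∃ Pc : Measure ((ℝ × ℝ) × (ℝ × ℝ)), IsCoupling Pc (P t x) (P t y) ∧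
      ∫⁻ w, ENNReal.ofReal (|w.1.1 - w.2.1| + |w.1.2 - w.2.2|) ∂Pc
        ≤ ENNReal.ofReal ((|x.1 - y.1| + |x.2 - y.2|) * D) := by
  set m : ℝ × ℝ := (min x.1 y.1, min x.2 y.2) with hm
  set a : ℝ × ℝ := (x.1 - m.1, x.2 - m.2) with ha
  set b : ℝ × ℝ := (y.1 - m.1, y.2 - m.2) with hb
  have mM : m ∈ Mset := Mset_min hx hy
  have aM : a ∈ Mset := Mset_sub hx mM (min_le_left _ _) (min_le_left _ _)
  have bM : b ∈ Mset := Mset_sub hy mM (min_le_right _ _) (min_le_right _ _)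
  obtain ⟨x1, x2, x3⟩ := hP t ht x hx
  obtain ⟨y1, y2, y3⟩ := hP t ht y hy
  obtain ⟨m1, m2, m3⟩ := hP t ht m mM
  obtain ⟨a1, a2, a3⟩ := hP t ht a aM
  obtain ⟨b1, b2, b3⟩ := hP t ht b bM
  set R := (P t a).prod (P t b) with hR
  have Rf : R.map Prod.fst = P t a := by simp [hR, Measure.map_fst_prod]
  have Rs : R.map Prod.snd = P t b := by simp [hR, Measure.map_snd_prod]
  have bx : ((P t m).prod R).map (fun w => w.1 + w.2.1) = P t x := by
    refine branch measurable_fst Rf (Mset_ae m2) (Mset_ae a2) (Mset_ae x2) ?_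
    intro l h1 h2
    rw [m3 l h1 h2, a3 l h1 h2, x3 l h1 h2, ← Real.exp_add]
    congr 1; simp only [ha]; ring
  have by' : ((P t m).prod R).map (fun w => w.1 + w.2.2) = P t y := by
    refine branch measurable_snd Rs (Mset_ae m2) (Mset_ae b2) (Mset_ae y2) ?_
    intro l h1 h2
    rw [m3 l h1 h2, b3 l h1 h2, y3 l h1 h2, ← Real.exp_add]
    congr 1; simp only [hb]; ring
  have hF : Measurable (fun w : (ℝ × ℝ) × ((ℝ × ℝ) × (ℝ × ℝ)) => (w.1 + w.2.1, w.1 + w.2.2)) := by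
    fun_prop
  have hmeas : Measurable (fun z : ℝ × ℝ => ENNReal.ofReal (|z.1| + |z.2|)) := by fun_prop
  refine ⟨((P t m).prod R).map (fun w => (w.1 + w.2.1, w.1 + w.2.2)), ⟨?_, ?_, ?_⟩, ?_⟩
  · exact Measure.isProbabilityMeasure_map hF.aemeasurable
  · rw [Measure.map_map measurable_fst hF]; exact bx
  · rw [Measure.map_map measurable_snd hF]; exact by'
  · rw [lintegral_map (by fun_prop) hF]
    have Qs : ((P t m).prod R).map Prod.snd = R := by simp [Measure.map_snd_prod]
    have i1 : ∫⁻ w, ENNReal.ofReal (|w.2.1.1| + |w.2.1.2|) ∂((P t m).prod R)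
        = ∫⁻ z, ENNReal.ofReal (|z.1| + |z.2|) ∂(P t a) := by
      rw [← Rf, lintegral_map hmeas measurable_fst, ← Qs,
        lintegral_map (by fun_prop) measurable_snd, Qs]
    have i2 : ∫⁻ w, ENNReal.ofReal (|w.2.2.1| + |w.2.2.2|) ∂((P t m).prod R)
        = ∫⁻ z, ENNReal.ofReal (|z.1| + |z.2|) ∂(P t b) := by
      rw [← Rs, lintegral_map hmeas measurable_snd, ← Qs,
        lintegral_map (by fun_prop) measurable_snd, Qs]
    have a0 : 0 ≤ a.1 + a.2 := add_nonneg (sub_nonneg.2 (min_le_left _ _)) (sub_nonneg.2 (min_le_left _ _))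
    have b0 : 0 ≤ b.1 + b.2 := add_nonneg (sub_nonneg.2 (min_le_right _ _)) (sub_nonneg.2 (min_le_right _ _))
    calc _ ≤ ∫⁻ w, (ENNReal.ofReal (|w.2.1.1| + |w.2.1.2|) + ENNReal.ofReal (|w.2.2.1| + |w.2.2.2|))
            ∂((P t m).prod R) := by
          apply lintegral_mono
          intro w
          beta_reduce
          rw [← ENNReal.ofReal_add (by positivity) (by positivity)]
          apply ENNReal.ofReal_le_ofReal
          simp only [Prod.fst_add, Prod.snd_add, add_sub_add_left_eq_sub]
          linarith [abs_sub w.2.1.1 w.2.2.1, abs_sub w.2.1.2 w.2.2.2]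
      _ = ∫⁻ z, ENNReal.ofReal (|z.1| + |z.2|) ∂(P t a)
          + ∫⁻ z, ENNReal.ofReal (|z.1| + |z.2|) ∂(P t b) := by
          rw [lintegral_add_left (by fun_prop), i1, i2]
      _ ≤ ENNReal.ofReal ((a.1 + a.2) * D) + ENNReal.ofReal ((b.1 + b.2) * D) :=
          add_le_add (transition_moment hP ht hD aM) (transition_moment hP ht hD bM)
      _ = ENNReal.ofReal ((|x.1 - y.1| + |x.2 - y.2|) * D) := by
          rw [← ENNReal.ofReal_add (by positivity) (by positivity)]
          congr 1
          rw [← max_sub_min_eq_abs, ← max_sub_min_eq_abs]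
          have := max_add_min x.1 y.1
          have := max_add_min x.2 y.2
          have e1 : max x.1 y.1 = x.1 + y.1 - min x.1 y.1 := by linarith
          have e2 : max x.2 y.2 = x.2 + y.2 - min x.2 y.2 := by linarith
          rw [← add_mul]
          congr 1
          have f1 := min_comm x.1 y.1
          have f2 := min_comm x.2 y.2
          have g1 := max_comm x.1 y.1
          have g2 := max_comm x.2 y.2
          simp only [ha, hb, hm]
          linarith

/-- If `det H > 0` and `trace H < 0`, then there are `λ, ϑ > 0` such
that for all `t ≥ 0` and `x, y ∈ 𝕄` some coupling of `P_t(x,·)` and `P_t(y,·)` has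
cost at most `ϑ |x-y| e^{-λt}`, whence `W₁(δₓP_t, δ_yP_t) ≤ ϑ |x-y| e^{-λt}`. -/
theorem exponential_ergodicity_MSB (B : BranchingMechanism)
    (V : ℝ → (ℝ × ℝ) → ℝ × ℝ)
    (hV : ∀ l : ℝ × ℝ, 0 ≤ l.1 → 0 ≤ l.2 → SolvesCumulant B l (fun t => V t l))
    (P : ℝ → (ℝ × ℝ) → Measure (ℝ × ℝ))
    (hP : IsMSBTransition V P)
    (hdet : H11 B * H22 B - H12 B * H21 B > 0)
    (htr : H11 B + H22 B < 0) :
    ∃ lam : ℝ, 0 < lam ∧ ∃ θ : ℝ, 0 < θ ∧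
      ∀ t : ℝ, 0 ≤ t → ∀ x ∈ Mset, ∀ y ∈ Mset,
        ∃ Pc : Measure ((ℝ × ℝ) × (ℝ × ℝ)), IsCoupling Pc (P t x) (P t y) ∧
          ∫⁻ w, ENNReal.ofReal (|w.1.1 - w.2.1| + |w.1.2 - w.2.2|) ∂Pc
            ≤ ENNReal.ofReal
                (θ * Real.sqrt ((x.1 - y.1) ^ 2 + (x.2 - y.2) ^ 2) *
                  Real.exp (-lam * t)) := by
  have hb := H12_nonneg B
  have hc := H21_nonneg B
  set a := H11 B with ha
  set b := H12 B
  set c := H21 B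
  set d := H22 B
  have had : 0 < a * d := by nlinarith [mul_nonneg hb hc]
  have ha0 : a < 0 := by
    by_contra! h
    nlinarith
  have hd0 : d < 0 := by nlinarith
  set w1 := c - d with hw1
  set w2 := b - a with hw2
  have w1p : 0 < w1 := by linarith
  have w2p : 0 < w2 := by linarith
  set det := a * d - b * c with hdetdef
  have hdet' : 0 < det := hdet
  set lam := det / (w1 + w2) with hlam
  have hlam0 : 0 < lam := by positivity
  have L : lam * (w1 + w2) = det := by rw [hlam]; field_simp
  have c1 : w1 * a + w2 * c ≤ -lam * w1 := by
    have e : w1 * a + w2 * c = -det := by simp only [hw1, hw2, hdetdef]; ring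
    rw [e]; nlinarith [mul_pos hlam0 w2p]
  have c2 : w1 * b + w2 * d ≤ -lam * w2 := by
    have e : w1 * b + w2 * d = -det := by simp only [hw1, hw2, hdetdef]; ring
    rw [e]; nlinarith [mul_pos hlam0 w1p]
  set κ := (w1 + w2) / w1 + (w1 + w2) / w2 with hκ
  have hκ0 : 0 < κ := by positivity
  refine ⟨lam, hlam0, 2 * κ, by positivity, ?_⟩
  intro t ht x hx y hy
  have hE := Real.exp_pos (-lam * t)
  have hD : ∀ e : ℝ, 0 < e → (V t (e, e)).1 ≤ (κ * Real.exp (-lam * t)) * e ∧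
      (V t (e, e)).2 ≤ (κ * Real.exp (-lam * t)) * e := by
    intro e he
    have hs := hV (e, e) he.le he.le
    have h := V_decay B hs w1p.le w2p.le c1 c2 ht
    obtain ⟨n1, n2⟩ := hs.2.1 t ht
    simp only at h n1 n2
    have k1 : (w1 + w2) / w1 * (Real.exp (-lam * t) * e) ≤ κ * (Real.exp (-lam * t) * e) := by
      gcongr; rw [hκ]; linarith [div_pos (add_pos w1p w2p) w2p]
    have k2 : (w1 + w2) / w2 * (Real.exp (-lam * t) * e) ≤ κ * (Real.exp (-lam * t) * e) := by
      gcongr; rw [hκ]; linarith [div_pos (add_pos w1p w2p) w1p]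
    constructor
    · have : (V t (e, e)).1 ≤ (w1 + w2) / w1 * (Real.exp (-lam * t) * e) := by
        rw [div_mul_eq_mul_div, le_div_iff₀ w1p]
        nlinarith [mul_nonneg w2p.le n2]
      linarith
    · have : (V t (e, e)).2 ≤ (w1 + w2) / w2 * (Real.exp (-lam * t) * e) := by
        rw [div_mul_eq_mul_div, le_div_iff₀ w2p]
        nlinarith [mul_nonneg w1p.le n1]
      linarith
  obtain ⟨Pc, h1, h2⟩ := coupling_exists hP ht (by positivity) hD hx hy
  refine ⟨Pc, h1, h2.trans (ENNReal.ofReal_le_ofReal ?_)⟩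
  set r := Real.sqrt ((x.1 - y.1) ^ 2 + (x.2 - y.2) ^ 2)
  have r1 : |x.1 - y.1| ≤ r := Real.abs_le_sqrt (by nlinarith [sq_nonneg (x.2 - y.2)])
  have r2 : |x.2 - y.2| ≤ r := Real.abs_le_sqrt (by nlinarith [sq_nonneg (x.1 - y.1)])
  calc (|x.1 - y.1| + |x.2 - y.2|) * (κ * Real.exp (-lam * t))
      ≤ (r + r) * (κ * Real.exp (-lam * t)) := by gcongr
    _ = _ := by ring
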